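/- arXiv:2103.10004 — 2 statements merged into one kernel-verified Lean document; each statement's English description precedes it below -/
import Mathlib

section
/- The covering functional of the three-dimensional unit cross-polytope by ten translates satisfies γ₁₀(K₁) = 3/5. -/
open Pointwise

/-- The unit cross-polytope in ℝ³. -/
def K1 : Set (Fin 3 → ℝ) := {x | |x 0| + |x 1| + |x 2| ≤ 1}

/-- `K1` can be covered by `m` translates of `lam • K1`. -/
def CoversWith (m : ℕ) (lam : ℝ) : Prop :=
  ∃ u : Fin m → (Fin 3 → ℝ), K1 ⊆ ⋃ i, (u i +ᵥ lam • K1)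

theorem mem_vadd_smul_K1_iff {lam : ℝ} (hlam : 0 < lam) (u x : Fin 3 → ℝ) :
    x ∈ u +ᵥ lam • K1 ↔ |x 0 - u 0| + |x 1 - u 1| + |x 2 - u 2| ≤ lam := by
  rw [Set.mem_vadd_set_iff_neg_vadd_mem, Set.mem_smul_set_iff_inv_smul_mem₀ hlam.ne']
  simp only [K1, Set.mem_ofPred_eq, vadd_eq_add, Pi.smul_apply, Pi.sub_apply, smul_eq_mul,
    abs_mul, abs_of_pos (inv_pos.2 hlam), neg_add_eq_sub, ← mul_add]
  rw [inv_mul_le_iff₀ hlam, mul_one]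

/-- Centres of ten translates of `(3 / 5) • K1` covering `K1`, in units of `1 / 5`. -/
def coveringCenters : Fin 10 → Fin 3 → ℤ :=
  ![![2, 0, 0], ![-2, 0, 0], ![0, 2, 0], ![0, -2, 0], ![0, 0, 2], ![0, 0, -2],
    ![1, 1, 0], ![1, -1, 0], ![-1, 1, 0], ![-1, -1, 0]]

theorem coversWith_ten_three_fifths : CoversWith 10 (3 / 5) := by
  refine ⟨fun i j ↦ coveringCenters i j / 5, fun x hx ↦ ?_⟩
  simp only [Set.mem_iUnion, mem_vadd_smul_K1_iff (show (0 : ℝ) < 3 / 5 by norm_num)]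
  by_contra! hfar
  simp [Fin.forall_fin_succ, coveringCenters] at hfar
  simp only [K1, Set.mem_ofPred_eq] at hx
  generalize x 0 = a at *
  generalize x 1 = b at *
  generalize x 2 = c at *
  grind (splits := 30)

/-- Eleven points of `K1` with pairwise `ℓ¹`-distance at least `6 / 5`, in units of `1 / 5`. -/
def separatedPoints : Fin 11 → Fin 3 → ℤ :=
  ![![5, 0, 0], ![-5, 0, 0], ![0, 5, 0], ![0, -5, 0], ![0, 0, 5], ![0, 0, -5],
    ![2, -1, -2], ![-2, -2, -1], ![-1, 2, -2], ![-2, 1, 2], ![2, 2, 1]]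

theorem separatedPoints_norm_le (i : Fin 11) :
    |separatedPoints i 0| + |separatedPoints i 1| + |separatedPoints i 2| ≤ 5 := by
  revert i
  decide

theorem six_le_dist_separatedPoints (i j : Fin 11) (hij : i ≠ j) :
    6 ≤ |separatedPoints i 0 - separatedPoints j 0| + |separatedPoints i 1 - separatedPoints j 1| +
      |separatedPoints i 2 - separatedPoints j 2| := by
  revert i j
  decide

theorem three_fifths_le_of_coversWith_ten {lam : ℝ} (hlam : 0 < lam) (h : CoversWith 10 lam) :
    3 / 5 ≤ lam := by
  obtain ⟨u, hu⟩ := h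
  have hcov (i : Fin 11) : ∃ k : Fin 10, |(separatedPoints i 0 : ℝ) / 5 - u k 0| +
      |(separatedPoints i 1 : ℝ) / 5 - u k 1| + |(separatedPoints i 2 : ℝ) / 5 - u k 2| ≤ lam := by
    have hmem : (fun j ↦ (separatedPoints i j : ℝ) / 5) ∈ K1 := by
      have hle : |(separatedPoints i 0 : ℝ)| + |(separatedPoints i 1 : ℝ)| +
          |(separatedPoints i 2 : ℝ)| ≤ 5 :=
        mod_cast separatedPoints_norm_le i
      simp only [K1, Set.mem_ofPred_eq, abs_div, abs_of_pos (show (0 : ℝ) < 5 by norm_num)]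
      linarith
    obtain ⟨k, hk⟩ := Set.mem_iUnion.1 (hu hmem)
    exact ⟨k, (mem_vadd_smul_K1_iff hlam _ _).1 hk⟩
  choose f hf using hcov
  obtain ⟨i, j, hij, hfij⟩ := Fintype.exists_ne_map_eq_of_card_lt f (by simp)
  have hi := hf i
  have hj := hf j
  rw [← hfij] at hj
  have hsep : (6 : ℝ) ≤ |(separatedPoints i 0 : ℝ) - separatedPoints j 0| +
      |(separatedPoints i 1 : ℝ) - separatedPoints j 1| +
      |(separatedPoints i 2 : ℝ) - separatedPoints j 2| :=
    mod_cast six_le_dist_separatedPoints i j hij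
  have htri (l : Fin 3) : |(separatedPoints i l : ℝ) - separatedPoints j l| ≤
      5 * (|(separatedPoints i l : ℝ) / 5 - u (f i) l| +
        |(separatedPoints j l : ℝ) / 5 - u (f i) l|) := by
    have := abs_sub_le ((separatedPoints i l : ℝ) / 5) (u (f i) l) ((separatedPoints j l : ℝ) / 5)
    rw [abs_sub_comm (u (f i) l), ← sub_div, abs_div, abs_of_pos (show (0 : ℝ) < 5 by norm_num)]
      at this
    linarith
  linarith [htri 0, htri 1, htri 2]

/-- γ₁₀(K₁) = 3/5. -/
theorem gamma_ten_eq_three_fifths :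
    IsLeast {lam : ℝ | 0 < lam ∧ CoversWith 10 lam} (3 / 5) :=
  ⟨⟨by norm_num, coversWith_ten_three_fifths⟩,
    fun _ h ↦ three_fifths_le_of_coversWith_ten h.1 h.2⟩
end

section
/- Let e = (1/5, 2/5, 2/5), f = (2/5, 1/5, 2/5), e′ = (1/5, 2/5, −2/5), f′ = (2/5, 1/5, −2/5) (these are 3/5-node points of the two adjacent facets conv{(0,0,1),(1,0,0),(0,1,0)} and conv{(0,0,−1),(1,0,0),(0,1,0)} of K₁). If a homothetic copy λK₁ + u (λ > 0, u ∈ ℝ³) contains all four points e, f, e′, f′, then λ ≥ 3/5. -/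
open Pointwise

/-- Membership in a homothetic copy of the cross-polytope is an `ℓ¹`-distance bound. -/
lemma abs_sub_add_le_of_mem_vadd_smul_K1 {lam : ℝ} (hlam : 0 ≤ lam) {u x : Fin 3 → ℝ}
    (hx : x ∈ u +ᵥ lam • K1) :
    |x 0 - u 0| + |x 1 - u 1| + |x 2 - u 2| ≤ lam := by
  obtain ⟨_, ⟨z, hz, rfl⟩, rfl⟩ := hx
  have hz : |z 0| + |z 1| + |z 2| ≤ 1 := hz
  simp only [vadd_eq_add, Pi.add_apply, Pi.smul_apply, smul_eq_mul, add_sub_cancel_left,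
    abs_mul, abs_of_nonneg hlam]
  nlinarith

/-- If a homothetic copy `λ • K1 + u` contains the four 3/5-node points
`e = (1/5, 2/5, 2/5)`, `f = (2/5, 1/5, 2/5)`, `e' = (1/5, 2/5, -2/5)`,
`f' = (2/5, 1/5, -2/5)` of two adjacent facets of `K1`, then `λ ≥ 3/5`. -/
theorem ratio_ge_three_fifths_of_four_node_points
    (lam : ℝ) (hlam : 0 < lam) (u : Fin 3 → ℝ)
    (he : ![(1 : ℝ)/5, 2/5, 2/5] ∈ u +ᵥ lam • K1)
    (hf : ![(2 : ℝ)/5, 1/5, 2/5] ∈ u +ᵥ lam • K1)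
    (he' : ![(1 : ℝ)/5, 2/5, -(2/5)] ∈ u +ᵥ lam • K1)
    (hf' : ![(2 : ℝ)/5, 1/5, -(2/5)] ∈ u +ᵥ lam • K1) :
    3 / 5 ≤ lam := by
  have h₁ := abs_sub_add_le_of_mem_vadd_smul_K1 hlam.le he
  have h₂ := abs_sub_add_le_of_mem_vadd_smul_K1 hlam.le hf'
  simp only [Matrix.cons_val] at h₁ h₂
  linarith [neg_le_abs (1 / 5 - u 0), le_abs_self (2 / 5 - u 1), le_abs_self (2 / 5 - u 2),
    le_abs_self (2 / 5 - u 0), neg_le_abs (1 / 5 - u 1), neg_le_abs (-(2 / 5) - u 2)]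
end
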